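/- Let ψ : Ω → ℝ be an eigenvector of H with eigenvalue E, set E' := E + K, and assume Σ_{α∈Ω} ψ(α)² ≤ 1. Assume the classically allowed region Ū := {α ∈ Ω : 1/u(α) − E' < 0} is nonempty, fix ε ∈ (0,1), let S be the Agmon action defined from ε, u, E' as in the context, and set ū := max_{β∈Ū} u(β). Then for every α ∈ Ω with 1/u(α) − E' > 0, |ψ(α)| ≤ √( (E'·ū·u(α) − u(α)) / (ū − E'·ū·u(α)) ) · e^{−S(α)}/√ε. (Theorem IV.2: eigenstates decay exponentially in the Agmon action throughout the classically forbidden region of the inverse landscape.) -/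

import Mathlib

open Matrix Finset


lemma aux_sym {Ω : Type*} [Fintype Ω] [DecidableEq Ω] (G : SimpleGraph Ω) [DecidableRel G.Adj]
    (F : Ω → Ω → ℝ) (Q : Ω → ℝ) (h : ∀ a b, G.Adj a b → F a b + F b a ≤ Q a + Q b) :
    ∑ a, ∑ b, (if G.Adj a b then F a b else 0) ≤ ∑ a, G.degree a * Q a := by
  have h1 : ∑ a, ∑ b, (if G.Adj a b then F a b else 0)
      = ∑ a, ∑ b, (if G.Adj a b then F b a else 0) := by
    rw [Finset.sum_comm]
    refine Finset.sum_congr rfl fun a _ => Finset.sum_congr rfl fun b _ => ?_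
    simp only [G.adj_comm]
  have h2 : ∑ a, ∑ b, (if G.Adj a b then Q a else 0) = ∑ a, G.degree a * Q a := by
    refine Finset.sum_congr rfl fun a _ => ?_
    rw [← Finset.sum_filter, Finset.sum_const, nsmul_eq_mul]
    congr 2
    rw [← G.card_neighborFinset_eq_degree, G.neighborFinset_eq_filter]
  have h3 : ∑ a, ∑ b, (if G.Adj a b then Q a else 0)
      = ∑ a, ∑ b, (if G.Adj a b then Q b else 0) := by
    rw [Finset.sum_comm]
    refine Finset.sum_congr rfl fun a _ => Finset.sum_congr rfl fun b _ => ?_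
    simp only [G.adj_comm]
  have h4 : ∑ a, ∑ b, ((if G.Adj a b then F a b else 0) + (if G.Adj a b then F b a else 0))
      ≤ ∑ a, ∑ b, ((if G.Adj a b then Q a else 0) + (if G.Adj a b then Q b else 0)) := by
    refine Finset.sum_le_sum fun a _ => Finset.sum_le_sum fun b _ => ?_
    by_cases hab : G.Adj a b
    · simpa [hab] using h a b hab
    · simp [hab]
  simp only [Finset.sum_add_distrib] at h4
  linarith

lemma aux_edge (x y p q a b c d : ℝ) (hx : 0 < x) (hy : 0 < y) (ha : 0 < a) (hb : 0 < b)
    (h1 : (x - y) ^ 2 ≤ c * x ^ 2) (h2 : (x - y) ^ 2 ≤ d * y ^ 2) :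
    (x ^ 2 * p * q - x ^ 2 * p ^ 2 * (b / a)) + (y ^ 2 * q * p - y ^ 2 * q ^ 2 * (a / b))
      ≤ c * x ^ 2 * p ^ 2 / 2 + d * y ^ 2 * q ^ 2 / 2 := by
  have e1 : 2 * (x * p) * (y * q) ≤ x ^ 2 * p ^ 2 * (b / a) + y ^ 2 * q ^ 2 * (a / b) := by
    have : x ^ 2 * p ^ 2 * (b / a) + y ^ 2 * q ^ 2 * (a / b) - 2 * (x * p) * (y * q)
        = (x * p * b - y * q * a) ^ 2 / (a * b) := by
      field_simp
      ring
    have : 0 ≤ (x * p * b - y * q * a) ^ 2 / (a * b) := by positivity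
    linarith
  have e2 := mul_le_mul_of_nonneg_right h1 (sq_nonneg p)
  have e3 := mul_le_mul_of_nonneg_right h2 (sq_nonneg q)
  have e4 : (x - y) ^ 2 * (p * q) ≤ (x - y) ^ 2 * ((p ^ 2 + q ^ 2) / 2) :=
    mul_le_mul_of_nonneg_left (by nlinarith [sq_nonneg (p - q)]) (sq_nonneg _)
  nlinarith

lemma aux_exp (s r z : ℝ) (hz : 0 ≤ z) (h1 : s - r ≤ Real.log (1 + √z))
    (h2 : r - s ≤ Real.log (1 + √z)) :
    (Real.exp s - Real.exp r) ^ 2 ≤ z * Real.exp s ^ 2 := by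
  have hq := Real.sqrt_nonneg z
  have hs := Real.exp_pos s
  have a1 : Real.exp s ≤ (1 + √z) * Real.exp r := by
    have : Real.exp s ≤ Real.exp (Real.log (1 + √z) + r) := Real.exp_le_exp.2 (by linarith)
    rwa [Real.exp_add, Real.exp_log (by linarith)] at this
  have a2 : Real.exp r ≤ (1 + √z) * Real.exp s := by
    have : Real.exp r ≤ Real.exp (Real.log (1 + √z) + s) := Real.exp_le_exp.2 (by linarith)
    rwa [Real.exp_add, Real.exp_log (by linarith)] at this
  have hh : |Real.exp s - Real.exp r| ≤ √z * Real.exp s := by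
    rw [abs_le]
    constructor
    · linarith
    · by_cases h : Real.exp r ≤ Real.exp s
      · nlinarith
      · nlinarith
  have := pow_le_pow_left₀ (abs_nonneg _) hh 2
  rwa [sq_abs, mul_pow, Real.sq_sqrt hz] at this

/-- **Theorem IV.2**: eigenstates decay exponentially in the Agmon action throughout the
classically forbidden region of the inverse landscape: for `α` with `1/u α − E' > 0`,
`|ψ α| ≤ √((E'·ū·u α − u α)/(ū − E'·ū·u α)) · e^{−S α}/√ε`, where `ū = max_{β ∈ Ū} u β`. -/
theorem mbll_agmon_decay_estimate
    {Ω : Type*} [Fintype Ω] [DecidableEq Ω] [Nonempty Ω]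
    (G : SimpleGraph Ω) [DecidableRel G.Adj] (hG : G.Connected)
    (t : ℝ) (ht : 0 < t) (V : Ω → ℝ) (K : ℝ)
    (H : Matrix Ω Ω ℝ)
    (hH : ∀ α β, H α β = if α = β then V α else if G.Adj α β then -t else 0)
    (hK : ∀ α, 0 ≤ K + V α - t * (G.degree α + 1))
    (u : Ω → ℝ) (hu : u = (H + K • (1 : Matrix Ω Ω ℝ))⁻¹ *ᵥ (fun _ => 1))
    (hupos : ∀ α, 0 < u α)
    (ψ : Ω → ℝ) (E : ℝ) (hψ : H *ᵥ ψ = E • ψ)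
    (hnorm : ∑ α, ψ α ^ 2 ≤ 1)
    (E' : ℝ) (hE' : E' = E + K)
    (Ubar : Finset Ω) (hUbar : ∀ α, α ∈ Ubar ↔ 1 / u α - E' < 0) (hUne : Ubar.Nonempty)
    (ε : ℝ) (hε0 : 0 < ε) (hε1 : ε < 1)
    (w : Ω → Ω → ℝ)
    (hw : ∀ α β, w α β =
      min (Real.log (1 + Real.sqrt (2 * (1 - ε) / (t * G.degree α) * max (1 / u α - E') 0)))
          (Real.log (1 + Real.sqrt (2 * (1 - ε) / (t * G.degree β) * max (1 / u β - E') 0))))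
    (S : Ω → ℝ)
    (hS : ∀ α, S α = sInf {s : ℝ | ∃ x ∈ Ubar, ∃ p : G.Walk x α,
      s = (p.darts.map fun d => w d.toProd.1 d.toProd.2).sum})
    (ubar : ℝ) (hubar : ubar = Ubar.sup' hUne u) :
    ∀ α, 0 < 1 / u α - E' →
      |ψ α| ≤ Real.sqrt ((E' * ubar * u α - u α) / (ubar - E' * ubar * u α))
        * (Real.exp (-S α) / Real.sqrt ε) := by
  classical
  intro α hα
  set P : Ω → ℝ := fun k => max (1 / u k - E') 0 with hP
  have hP0 : ∀ k, 0 ≤ P k := fun k => le_max_right _ _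
  set c : Ω → ℝ := fun k => 2 * (1 - ε) / (t * G.degree k) * P k with hc
  have hc0 : ∀ k, 0 ≤ c k := fun k => by
    have : 0 ≤ 1 - ε := by linarith
    have := hP0 k
    simp only [hc]; positivity
  have hw' : ∀ a b, w a b = min (Real.log (1 + √(c a))) (Real.log (1 + √(c b))) := hw
  have hlog : ∀ k, 0 ≤ Real.log (1 + √(c k)) := fun k =>
    Real.log_nonneg (by linarith [Real.sqrt_nonneg (c k)])
  have hw0 : ∀ a b, 0 ≤ w a b := fun a b => by
    rw [hw']; exact le_min (hlog a) (hlog b)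
  have hwsum : ∀ (x y : Ω) (p : G.Walk x y),
      0 ≤ (p.darts.map fun d => w d.toProd.1 d.toProd.2).sum := fun x y p => by
    apply List.sum_nonneg
    intro z hz
    obtain ⟨d, _, rfl⟩ := List.mem_map.1 hz
    exact hw0 _ _
  have hbdd : ∀ y, BddBelow {s : ℝ | ∃ x ∈ Ubar, ∃ p : G.Walk x y,
      s = (p.darts.map fun d => w d.toProd.1 d.toProd.2).sum} := fun y =>
    ⟨0, by rintro s ⟨x, _, p, rfl⟩; exact hwsum _ _ p⟩
  have hne : ∀ y, {s : ℝ | ∃ x ∈ Ubar, ∃ p : G.Walk x y,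
      s = (p.darts.map fun d => w d.toProd.1 d.toProd.2).sum}.Nonempty := fun y => by
    obtain ⟨x, hx⟩ := hUne
    obtain ⟨p⟩ := hG.preconnected x y
    exact ⟨_, x, hx, p, rfl⟩
  have hS0 : ∀ y ∈ Ubar, S y = 0 := fun y hy => by
    apply le_antisymm
    · rw [hS]
      exact csInf_le (hbdd y) ⟨y, hy, SimpleGraph.Walk.nil, by simp⟩
    · rw [hS]
      apply le_csInf (hne y)
      rintro s ⟨x, _, p, rfl⟩; exact hwsum _ _ p
  have hSle : ∀ a b, G.Adj a b → S b - S a ≤ w a b := fun a b hab => by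
    have : S b - w a b ≤ S a := by
      rw [hS a]
      apply le_csInf (hne a)
      rintro s ⟨x, hx, p, rfl⟩
      have : S b ≤ (p.darts.map fun d => w d.toProd.1 d.toProd.2).sum + w a b := by
        rw [hS b]
        exact csInf_le (hbdd b) ⟨x, hx, p.concat hab, by
          simp [SimpleGraph.Walk.darts_concat]⟩
      linarith
    linarith
  have hwsymm : ∀ a b, w a b = w b a := fun a b => by rw [hw', hw', min_comm]
  have hexp : ∀ a b, G.Adj a b →
      (Real.exp (S a) - Real.exp (S b)) ^ 2 ≤ c a * Real.exp (S a) ^ 2 := fun a b hab => by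
    have hl : w a b ≤ Real.log (1 + √(c a)) := by rw [hw']; exact min_le_left _ _
    apply aux_exp _ _ _ (hc0 a)
    · have := hSle b a hab.symm
      rw [hwsymm] at this
      linarith
    · linarith [hSle a b hab]
  -- matrix facts
  have hdet : IsUnit (H + K • (1 : Matrix Ω Ω ℝ)).det := by
    by_contra hcon
    rw [Matrix.nonsing_inv_apply_not_isUnit _ hcon] at hu
    have := hupos α
    rw [hu] at this
    simp at this
  have hAu : (H + K • (1 : Matrix Ω Ω ℝ)) *ᵥ u = fun _ => 1 := by
    rw [hu, Matrix.mulVec_mulVec, Matrix.mul_nonsing_inv _ hdet, Matrix.one_mulVec]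
  have hHf : ∀ (f : Ω → ℝ) (a : Ω), (H *ᵥ f) a
      = V a * f a - t * ∑ b, (if G.Adj a b then f b else 0) := fun f a => by
    have : ∀ b, H a b * f b = (if a = b then V a * f b else 0)
        - t * (if G.Adj a b then f b else 0) := fun b => by
      rw [hH]
      by_cases hab : a = b
      · subst hab; simp
      · by_cases h2 : G.Adj a b <;> simp [hab, h2]
    simp only [Matrix.mulVec, dotProduct, this, Finset.sum_sub_distrib, Finset.mul_sum]
    simp
  have hueq : ∀ a, (V a + K) * u a = 1 + t * ∑ b, (if G.Adj a b then u b else 0) := fun a => by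
    have := congrFun hAu a
    rw [Matrix.add_mulVec, Pi.add_apply, hHf, Matrix.smul_mulVec, Matrix.one_mulVec] at this
    simp only [Pi.smul_apply, smul_eq_mul] at this
    linarith
  have hψeq : ∀ a, (V a + K) * ψ a = E' * ψ a + t * ∑ b, (if G.Adj a b then ψ b else 0) :=
      fun a => by
    have := congrFun hψ a
    rw [hHf] at this
    simp only [Pi.smul_apply, smul_eq_mul] at this
    rw [hE']
    linarith
  set g : Ω → ℝ := fun a => Real.exp (S a) with hg
  have hloc : ∀ a, g a ^ 2 * ψ a ^ 2 * (1 / u a - E') = t * ∑ b, (if G.Adj a b then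
      (g a ^ 2 * ψ a * ψ b - g a ^ 2 * ψ a ^ 2 * (u b / u a)) else 0) := fun a => by
    have e : ∑ b, (if G.Adj a b then
      (g a ^ 2 * ψ a * ψ b - g a ^ 2 * ψ a ^ 2 * (u b / u a)) else 0)
        = g a ^ 2 * ψ a * (∑ b, (if G.Adj a b then ψ b else 0))
          - g a ^ 2 * ψ a ^ 2 / u a * ∑ b, (if G.Adj a b then u b else 0) := by
      rw [Finset.mul_sum, Finset.mul_sum, ← Finset.sum_sub_distrib]
      refine Finset.sum_congr rfl fun b _ => ?_
      split_ifs
      · ring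
      · ring
    rw [e]
    have h1 := hueq a
    have h2 := hψeq a
    have hua := (hupos a).ne'
    generalize (∑ b, (if G.Adj a b then ψ b else 0)) = X at *
    generalize (∑ b, (if G.Adj a b then u b else 0)) = Y at *
    field_simp
    linear_combination (-(g a ^ 2 * ψ a ^ 2)) * h1 + g a ^ 2 * ψ a * u a * h2
  have hmain := aux_sym G
    (fun a b => g a ^ 2 * ψ a * ψ b - g a ^ 2 * ψ a ^ 2 * (u b / u a))
    (fun a => c a * g a ^ 2 * ψ a ^ 2 / 2) (fun a b hab => by
      refine aux_edge (g a) (g b) (ψ a) (ψ b) (u a) (u b) (c a) (c b) (Real.exp_pos _) (Real.exp_pos _) (hupos a) (hupos b) ?_ ?_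
      · exact hexp a b hab
      · have := hexp b a hab.symm
        change (g b - g a) ^ 2 ≤ c b * g b ^ 2 at this
        linarith [sub_sq_comm (g a) (g b)])
  have hsum : ∑ a, g a ^ 2 * ψ a ^ 2 * (1 / u a - E')
      ≤ ∑ a, (1 - ε) * (P a * (g a ^ 2 * ψ a ^ 2)) := by
    simp only [hloc]
    rw [← Finset.mul_sum]
    refine (mul_le_mul_of_nonneg_left hmain ht.le).trans ?_
    rw [Finset.mul_sum]
    refine Finset.sum_le_sum fun a _ => ?_
    simp only [hc]
    have hPa := hP0 a
    have h1ε : 0 ≤ 1 - ε := by linarith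
    by_cases hd : (G.degree a : ℝ) = 0
    · rw [hd]; simp only [zero_mul, mul_zero]; positivity
    · apply le_of_eq
      field_simp
  -- the allowed region
  have hub : ∀ k ∈ Ubar, u k ≤ ubar := fun k hk => by
    rw [hubar]; exact Finset.le_sup' u hk
  obtain ⟨k0, hk0⟩ := hUne
  have hubpos : 0 < ubar := (hupos k0).trans_le (hub k0 hk0)
  have hM : 0 ≤ E' - 1 / ubar := by
    have h1 := (hUbar k0).1 hk0
    have h2 := one_div_le_one_div_of_le (hupos k0) (hub k0 hk0)
    linarith
  have hpt : ∀ a, P a * (g a ^ 2 * ψ a ^ 2)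
      ≤ g a ^ 2 * ψ a ^ 2 * (1 / u a - E') + (E' - 1 / ubar) * ψ a ^ 2 := fun a => by
    by_cases ha : a ∈ Ubar
    · have h1 := (hUbar a).1 ha
      have h2 := one_div_le_one_div_of_le (hupos a) (hub a ha)
      have h3 : P a = 0 := max_eq_right h1.le
      have h4 : g a = 1 := by simp [hg, hS0 a ha]
      rw [h3, h4]
      nlinarith [sq_nonneg (ψ a)]
    · have h1 : 0 ≤ 1 / u a - E' := by
        by_contra h; exact ha ((hUbar a).2 (by linarith))
      have h3 : P a = 1 / u a - E' := max_eq_left h1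
      rw [h3]
      have := mul_nonneg hM (sq_nonneg (ψ a))
      linarith
  have hfin : ε * ∑ a, P a * (g a ^ 2 * ψ a ^ 2) ≤ E' - 1 / ubar := by
    have h1 := Finset.sum_le_sum fun a (_ : a ∈ Finset.univ) => hpt a
    rw [Finset.sum_add_distrib, ← Finset.mul_sum] at h1
    rw [← Finset.mul_sum] at hsum
    have h2 := mul_le_mul_of_nonneg_left hnorm hM
    linarith
  have hsingle : P α * (g α ^ 2 * ψ α ^ 2) ≤ ∑ a, P a * (g a ^ 2 * ψ a ^ 2) :=
    Finset.single_le_sum (f := fun a => P a * (g a ^ 2 * ψ a ^ 2))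
      (fun a _ => mul_nonneg (hP0 a) (by positivity)) (Finset.mem_univ α)
  have hPα : P α = 1 / u α - E' := max_eq_left hα.le
  rw [hPα] at hsingle
  have hkey : ε * ((1 / u α - E') * (g α ^ 2 * ψ α ^ 2)) ≤ E' - 1 / ubar :=
    (mul_le_mul_of_nonneg_left hsingle hε0.le).trans hfin
  have huα := hupos α
  have hfrac : (E' * ubar * u α - u α) / (ubar - E' * ubar * u α)
      = (E' - 1 / ubar) / (1 / u α - E') := by
    have e1 : E' * ubar * u α - u α = (ubar * u α) * (E' - 1 / ubar) := by
      field_simp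
    have e2 : ubar - E' * ubar * u α = (ubar * u α) * (1 / u α - E') := by
      field_simp
    rw [e1, e2, mul_div_mul_left _ _ (by positivity)]
  rw [hfrac]
  refine abs_le_of_sq_le_sq ?_ (by positivity)
  rw [mul_pow, div_pow, Real.sq_sqrt (div_nonneg hM hα.le), Real.sq_sqrt hε0.le, Real.exp_neg,
    div_mul_div_comm, le_div_iff₀ (by positivity)]
  have hgpos : 0 < g α := Real.exp_pos _
  change _ ≤ _ * (g α)⁻¹ ^ 2
  rw [inv_pow, ← div_eq_mul_inv, le_div_iff₀ (by positivity)]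
  linarith
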